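/- Let p be an odd prime and let r be odd with 0 < r < p − 1. Then there exists a linear code C ⊆ (Z/pZ)^{p−1} with dim C = r, minimum distance p − r, and C ∩ C^⊥ = {0}; that is, an LCD MDS (p−1, r, p−r) code exists over the prime field GF(p) = Z/pZ. -/

import Mathlib

/-- Hamming weight of a vector: the number of nonzero coordinates. -/
noncomputable def hWeight {F : Type*} [Field F] {n : ℕ} (v : Fin n → F) : ℕ :=
  open scoped Classical in
  (Finset.univ.filter fun m => v m ≠ 0).card

/-- The dual code of `C` with respect to the standard bilinear form. -/
def dualCode {F : Type*} [Field F] {n : ℕ} (C : Submodule F (Fin n → F)) :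
    Submodule F (Fin n → F) where
  carrier := {v | ∀ u ∈ C, ∑ m, u m * v m = 0}
  add_mem' := by
    intro a b ha hb u hu
    have h : ∑ m, u m * (a + b) m = (∑ m, u m * a m) + ∑ m, u m * b m := by
      rw [← Finset.sum_add_distrib]
      exact Finset.sum_congr rfl fun m _ => by simp [mul_add]
    rw [h, ha u hu, hb u hu, add_zero]
  zero_mem' := by intro u hu; simp
  smul_mem' := by
    intro c a ha u hu
    have h : ∑ m, u m * (c • a) m = c * ∑ m, u m * a m := by
      rw [Finset.mul_sum]
      exact Finset.sum_congr rfl fun m _ => by simp [smul_eq_mul]; ring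
    rw [h, ha u hu, mul_zero]

/-- Minimum distance of a code: the least Hamming weight of a nonzero codeword. -/
noncomputable def minDist {F : Type*} [Field F] {n : ℕ} (C : Submodule F (Fin n → F)) : ℕ :=
  sInf {d | ∃ v ∈ C, v ≠ 0 ∧ hWeight v = d}

open Polynomial in
noncomputable def evMap (p s r : ℕ) [Fact p.Prime] (e : Fin (p - 1) ≃ (ZMod p)ˣ) :
    degreeLT (ZMod p) r →ₗ[ZMod p] (Fin (p - 1) → ZMod p) where
  toFun f := fun m => (((e m)⁻¹ ^ s : (ZMod p)ˣ) : ZMod p) * (f : (ZMod p)[X]).eval (e m : ZMod p)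
  map_add' f g := by ext m; simp [mul_add]
  map_smul' c f := by ext m; simp; ring

open Polynomial in
theorem evMap_eq_zero_iff (p s r : ℕ) [Fact p.Prime] (e : Fin (p - 1) ≃ (ZMod p)ˣ)
    (f : degreeLT (ZMod p) r) (m : Fin (p - 1)) :
    evMap p s r e f m = 0 ↔ (f : (ZMod p)[X]).eval (e m : ZMod p) = 0 := by
  simp [evMap]

open Polynomial in
theorem evMap_zeros (p s r : ℕ) [Fact p.Prime] (e : Fin (p - 1) ≃ (ZMod p)ˣ)
    (f : degreeLT (ZMod p) r) (hf : f ≠ 0) :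
    (Finset.univ.filter fun m => evMap p s r e f m = 0).card < r := by
  classical
  have hf' : (f : (ZMod p)[X]) ≠ 0 := by simpa using hf
  have hd : (f : (ZMod p)[X]).natDegree < r := by
    rw [natDegree_lt_iff_degree_lt hf']
    exact mem_degreeLT.1 f.2
  refine lt_of_le_of_lt ?_ hd
  by_contra! hlt
  have hinj : Function.Injective (fun m => (e m : ZMod p)) :=
    Units.val_injective.comp e.injective
  apply hf'
  refine eq_zero_of_natDegree_lt_card_of_eval_eq_zero' _
    ((Finset.univ.filter fun m => evMap p s r e f m = 0).image (fun m => (e m : ZMod p))) ?_ ?_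
  · intro x hx
    simp only [Finset.mem_image, Finset.mem_filter, Finset.mem_univ, true_and] at hx
    obtain ⟨m, hm, rfl⟩ := hx
    exact (evMap_eq_zero_iff p s r e f m).1 hm
  · rwa [Finset.card_image_of_injective _ hinj]

theorem hWeight_add {F : Type*} [Field F] [DecidableEq F] {n : ℕ} (v : Fin n → F) :
    (Finset.univ.filter fun m => v m = 0).card + hWeight v = n := by
  classical
  have := Finset.card_filter_add_card_filter_not (s := (Finset.univ : Finset (Fin n)))
    (fun m => v m = 0)
  rw [Finset.card_univ, Fintype.card_fin] at this
  unfold hWeight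
  convert this

theorem evMap_inj (p s r : ℕ) [Fact p.Prime] (hrp : r < p - 1) (e : Fin (p - 1) ≃ (ZMod p)ˣ) :
    Function.Injective (evMap p s r e) := by
  rw [injective_iff_map_eq_zero]
  intro f hf
  by_contra h
  have := evMap_zeros p s r e f h
  simp [hf] at this
  omega

open Polynomial in
theorem evMap_dual (p s : ℕ) [Fact p.Prime] (hrp : 2 * s + 1 < p - 1)
    (e : Fin (p - 1) ≃ (ZMod p)ˣ) (f : degreeLT (ZMod p) (2 * s + 1))
    (h : ∀ g, ∑ m, evMap p s (2 * s + 1) e g m * evMap p s (2 * s + 1) e f m = 0) : f = 0 := by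
  have hd := mem_degreeLT.1 f.2
  apply Subtype.ext
  ext k
  simp only [ZeroMemClass.coe_zero, coeff_zero]
  by_cases hk : k < 2 * s + 1
  swap
  · apply coeff_eq_zero_of_degree_lt
    refine lt_of_lt_of_le hd ?_
    exact_mod_cast (not_lt.1 hk)
  have hg : (X ^ (2 * s - k) : (ZMod p)[X]) ∈ degreeLT (ZMod p) (2 * s + 1) := by
    rw [mem_degreeLT, degree_X_pow]
    exact_mod_cast (by omega : 2 * s - k < 2 * s + 1)
  have h1 := h ⟨_, hg⟩
  have h2 : ∀ x : (ZMod p)ˣ, ((x⁻¹ ^ s : (ZMod p)ˣ) : ZMod p) * (x : ZMod p) ^ (2 * s - k) *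
      (((x⁻¹ ^ s : (ZMod p)ˣ) : ZMod p) * (f : (ZMod p)[X]).eval (x : ZMod p)) =
      ∑ j ∈ Finset.range (2 * s + 1), (f : (ZMod p)[X]).coeff j *
        (x : ZMod p) ^ (p - 1 - k + j) := by
    intro x
    have hx : x⁻¹ ^ s * x ^ (2 * s - k) * x⁻¹ ^ s = x ^ (p - 1 - k) := by
      have h3 : x ^ (p - 1) = 1 := ZMod.units_pow_card_sub_one_eq_one p x
      have h4 : x ^ (p - 1 - k) * x ^ k = 1 := by
        rw [← pow_add, Nat.sub_add_cancel (by omega), h3]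
      have h5 : x ^ (2 * s - k) * x ^ k = x ^ s * x ^ s := by
        rw [← pow_add, ← pow_add]; congr 1; omega
      rw [← mul_left_inj (x ^ k), h4, mul_right_comm, mul_assoc (x⁻¹ ^ s) (x ^ (2 * s - k)), h5]
      simp
    have hx' := congrArg (Units.val) hx
    simp only [Units.val_mul, Units.val_pow_eq_pow_val] at hx'
    have he : (f : (ZMod p)[X]).eval (x : ZMod p) =
        ∑ j ∈ Finset.range (2 * s + 1), (f : (ZMod p)[X]).coeff j * (x : ZMod p) ^ j := by
      apply eval_eq_sum_range'
      by_cases hf : (f : (ZMod p)[X]) = 0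
      · simp [hf]
      · rwa [natDegree_lt_iff_degree_lt hf]
    rw [← mul_assoc, Units.val_pow_eq_pow_val, hx', he, Finset.mul_sum]
    exact Finset.sum_congr rfl fun j _ => by rw [pow_add]; ring
  have h6 : ∑ x : (ZMod p)ˣ, ∑ j ∈ Finset.range (2 * s + 1), (f : (ZMod p)[X]).coeff j *
        (x : ZMod p) ^ (p - 1 - k + j) = 0 := by
    rw [← h1, ← e.sum_comp]
    refine Finset.sum_congr rfl fun m _ => ?_
    rw [← h2]
    simp [evMap]
  rw [Finset.sum_comm, Finset.sum_eq_single k] at h6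
  · rw [← Finset.mul_sum, Nat.sub_add_cancel (by omega)] at h6
    have := FiniteField.sum_pow_units (ZMod p) (p - 1)
    rw [ZMod.card, if_pos dvd_rfl] at this
    rw [this] at h6
    simpa using h6
  · intro j hj hjk
    rw [← Finset.mul_sum]
    have := FiniteField.sum_pow_units (ZMod p) (p - 1 - k + j)
    rw [ZMod.card, if_neg] at this
    · rw [this, mul_zero]
    · rintro ⟨c, hc⟩
      have hj := Finset.mem_range.1 hj
      rcases c with _ | _ | c
      · omega
      · omega
      · have : (p - 1) * (c + 1 + 1) = (p - 1) * c + 2 * (p - 1) := by ring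
        rw [this] at hc
        have := Nat.zero_le ((p - 1) * c)
        omega
  · intro hk'
    exact absurd (Finset.mem_range.2 hk) hk'

open Polynomial in
theorem evMap_attain (p s r : ℕ) [Fact p.Prime] (hr0 : 0 < r) (hrp : r < p - 1)
    (e : Fin (p - 1) ≃ (ZMod p)ˣ) :
    ∃ f, f ≠ 0 ∧ hWeight (evMap p s r e f) ≤ p - r := by
  classical
  obtain ⟨S, -, hS⟩ := Finset.exists_subset_card_eq (s := (Finset.univ : Finset (Fin (p - 1))))
    (n := r - 1) (by simp; omega)
  have hmonic : (∏ i ∈ S, (X - C (e i : ZMod p))).Monic := monic_prod_X_sub_C _ _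
  have hdeg : (∏ i ∈ S, (X - C (e i : ZMod p))) ∈ degreeLT (ZMod p) r := by
    rw [mem_degreeLT, degree_eq_natDegree hmonic.ne_zero, natDegree_finset_prod_X_sub_C_eq_card, hS]
    exact_mod_cast (by omega : r - 1 < r)
  refine ⟨⟨_, hdeg⟩, ?_, ?_⟩
  · intro h
    exact hmonic.ne_zero (congrArg Subtype.val h)
  · have h1 := hWeight_add (evMap p s r e ⟨_, hdeg⟩)
    have h2 : S.card ≤ (Finset.univ.filter fun m => evMap p s r e ⟨_, hdeg⟩ m = 0).card := by
      apply Finset.card_le_card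
      intro i hi
      simp only [Finset.mem_filter, Finset.mem_univ, true_and]
      rw [evMap_eq_zero_iff]
      simp only [eval_prod]
      exact Finset.prod_eq_zero hi (by simp)
    omega

/-- For an odd prime `p` and odd `r` with `0 < r < p − 1`, there exists
an LCD MDS `(p−1, r, p−r)` code over the prime field `GF(p) = ℤ/pℤ`. -/
theorem exists_LCD_MDS_code_prime_field (p : ℕ) [Fact p.Prime] (hodd : Odd p)
    (r : ℕ) (hr : Odd r) (hr0 : 0 < r) (hrp : r < p - 1) :
    ∃ C : Submodule (ZMod p) (Fin (p - 1) → ZMod p),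
      Module.finrank (ZMod p) C = r ∧ minDist C = p - r ∧ C ⊓ dualCode C = ⊥ := by
  obtain ⟨s, rfl⟩ := hr
  have hc : Fintype.card (Fin (p - 1)) = Fintype.card (ZMod p)ˣ := by
    rw [ZMod.card_units, Fintype.card_fin]
  let e := Fintype.equivOfCardEq hc
  have hlow : ∀ f, f ≠ 0 → p - (2 * s + 1) ≤ hWeight (evMap p s (2 * s + 1) e f) := by
    intro f hf
    have h1 := evMap_zeros p s _ e f hf
    have h2 := hWeight_add (evMap p s (2 * s + 1) e f)
    omega
  have hinj := evMap_inj p s _ hrp e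
  refine ⟨LinearMap.range (evMap p s (2 * s + 1) e), ?_, ?_, ?_⟩
  · rw [LinearMap.finrank_range_of_inj hinj,
      (Polynomial.degreeLTEquiv (ZMod p) (2 * s + 1)).finrank_eq, Module.finrank_fin_fun]
  · obtain ⟨f, hf, hw⟩ := evMap_attain p s _ hr0 hrp e
    have hmem : p - (2 * s + 1) ∈ {d | ∃ v ∈ LinearMap.range (evMap p s (2 * s + 1) e),
        v ≠ 0 ∧ hWeight v = d} :=
      ⟨_, ⟨f, rfl⟩, fun h => hf (hinj (by rw [h, map_zero])), le_antisymm hw (hlow f hf)⟩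
    refine le_antisymm (Nat.sInf_le hmem) ?_
    refine le_csInf ⟨_, hmem⟩ ?_
    rintro d ⟨_, ⟨g, rfl⟩, hg, rfl⟩
    exact hlow g (fun h => hg (by rw [h, map_zero]))
  · rw [eq_bot_iff]
    rintro _ ⟨⟨f, rfl⟩, hf⟩
    rw [Submodule.mem_bot, evMap_dual p s hrp e f (fun g => hf _ ⟨g, rfl⟩), map_zero]
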